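/- Define ⟨τ_{d_1}⋯τ_{d_n}⟩_0 := (n-3)!/(d_1!⋯d_n!) if ∑_{j=1}^n d_j = n-3 and n ≥ 3, and 0 otherwise (including n < 3). Then for every n ≥ 2 and nonnegative integers d_1,…,d_n with ∑ d_j = n - 2, one has (n-1)·⟨τ_0 τ_{d_1}⋯τ_{d_n}⟩_0 = (1/2)·∑_{I ⊔ J = {1,…,n}} ⟨τ_0^2 ∏_{i∈I} τ_{d_i}⟩_0 · ⟨τ_0^2 ∏_{j∈J} τ_{d_j}⟩_0, where the sum runs over all ordered partitions of {1,…,n} into two disjoint (possibly empty) subsets. -/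

import Mathlib

open Finset

/-- The genus-zero correlator ⟨τ_{d_1}⋯τ_{d_n}⟩₀ = (n-3)!/(d_1!⋯d_n!)
when ∑ d_j = n-3 and n ≥ 3, and 0 otherwise. -/
noncomputable def corr0 (ds : Multiset ℕ) : ℚ :=
  if 3 ≤ Multiset.card ds ∧ ds.sum + 3 = Multiset.card ds then
    (Nat.factorial (Multiset.card ds - 3) : ℚ) / (ds.map (fun d => (Nat.factorial d : ℚ))).prod
  else 0

/-- Unnormalized genus-zero number. -/
def gzF {ι : Type*} (d : ι → ℕ) (I : Finset ι) : ℕ :=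
  if ∑ i ∈ I, d i + 1 = I.card then Nat.factorial (I.card - 1) else 0

lemma gzF_update_notMem {ι : Type*} [DecidableEq ι] (d : ι → ℕ) (I : Finset ι) (j : ι) (m : ℕ)
    (hj : j ∉ I) : gzF (Function.update d j m) I = gzF d I := by
  unfold gzF
  rw [Finset.sum_update_of_notMem hj]

lemma sum_update_pred {ι : Type*} [DecidableEq ι] (d : ι → ℕ) (J : Finset ι) (j : ι)
    (hj : j ∈ J) (h0 : d j ≠ 0) :
    ∑ i ∈ J, Function.update d j (d j - 1) i + 1 = ∑ i ∈ J, d i := by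
  rw [Finset.sum_update_of_mem hj, ← Finset.add_sum_erase J d hj, Finset.sdiff_singleton_eq_erase]
  omega

lemma gzF_insert {ι : Type*} [DecidableEq ι] (d : ι → ℕ) (J : Finset ι) (a : ι)
    (ha : a ∉ J) (h0 : d a = 0) :
    gzF d (insert a J) = (if J = ∅ then 1 else 0)
      + ∑ j ∈ J, d j * gzF (Function.update d j (d j - 1)) J := by
  have h1 : ∀ j ∈ J, d j * gzF (Function.update d j (d j - 1)) J
      = d j * (if ∑ i ∈ J, d i = J.card then Nat.factorial (J.card - 1) else 0) := by
    intro j hj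
    by_cases hd : d j = 0
    · simp [hd]
    · unfold gzF
      rw [sum_update_pred d J j hj hd]
  rw [Finset.sum_congr rfl h1, ← Finset.sum_mul]
  unfold gzF
  rw [Finset.sum_insert ha, Finset.card_insert_of_notMem ha, h0]
  by_cases hJ : J = ∅
  · simp [hJ]
  · have hc : J.card ≠ 0 := by simpa using hJ
    by_cases hs : ∑ i ∈ J, d i = J.card
    · simp [hs, hJ, Nat.mul_factorial_pred hc]
    · simp [hs, hJ]

lemma gz_main {ι : Type*} [DecidableEq ι] (k : ℕ) : ∀ (T : Finset ι) (d : ι → ℕ),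
    T.card = k → ∑ i ∈ T, d i + 2 = T.card →
    ∑ I ∈ T.powerset, gzF d I * gzF d (T \ I) = 2 * Nat.factorial (T.card - 1) := by
  induction k with
  | zero => intro T d h1 h2; omega
  | succ k ih =>
    intro T d hT hs
    obtain ⟨a, haT, ha0⟩ : ∃ a ∈ T, d a = 0 := by
      by_contra! hcon
      have : T.card • 1 ≤ ∑ i ∈ T, d i :=
        Finset.card_nsmul_le_sum T d 1 (fun i hi => Nat.one_le_iff_ne_zero.mpr (hcon i hi))
      simp at this
      omega
    obtain ⟨S, haS, rfl⟩ : ∃ S, a ∉ S ∧ insert a S = T :=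
      ⟨T.erase a, Finset.notMem_erase a T, Finset.insert_erase haT⟩
    rw [Finset.card_insert_of_notMem haS] at hT hs ⊢
    rw [Finset.sum_insert haS, ha0] at hs
    rw [Finset.sum_powerset_insert haS]
    have e1 : ∑ I ∈ S.powerset, gzF d I * gzF d (insert a S \ I)
        = gzF d S + ∑ I ∈ S.powerset, ∑ j ∈ S \ I,
          d j * (gzF (Function.update d j (d j - 1)) I
            * gzF (Function.update d j (d j - 1)) (S \ I)) := by
      have : gzF d S = ∑ I ∈ S.powerset, if I = S then gzF d I else 0 := by simp
      rw [this, ← Finset.sum_add_distrib]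
      refine Finset.sum_congr rfl fun I hI => ?_
      have hIS := Finset.mem_powerset.mp hI
      have haI : a ∉ I := fun h => haS (hIS h)
      rw [Finset.insert_sdiff_of_notMem _ haI, gzF_insert d (S \ I) a (by simp [haS]) ha0, mul_add,
        Finset.mul_sum]
      congr 1
      · have : S \ I = ∅ ↔ I = S := by
          rw [Finset.sdiff_eq_empty_iff_subset]
          exact ⟨fun h => Finset.Subset.antisymm hIS h, fun h => h ▸ Finset.Subset.refl _⟩
        simp [this]
      · refine Finset.sum_congr rfl fun j hj => ?_
        rw [gzF_update_notMem d I j _ (Finset.mem_sdiff.mp hj).2]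
        ring
    have e2 : ∑ I ∈ S.powerset, gzF d (insert a I) * gzF d (insert a S \ insert a I)
        = gzF d S + ∑ I ∈ S.powerset, ∑ j ∈ I,
          d j * (gzF (Function.update d j (d j - 1)) I
            * gzF (Function.update d j (d j - 1)) (S \ I)) := by
      have : gzF d S = ∑ I ∈ S.powerset, if I = ∅ then gzF d (S \ I) else 0 := by simp
      rw [this, ← Finset.sum_add_distrib]
      refine Finset.sum_congr rfl fun I hI => ?_
      have hIS := Finset.mem_powerset.mp hI
      have haI : a ∉ I := fun h => haS (hIS h)
      have hd : insert a S \ insert a I = S \ I := by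
        ext x
        simp only [Finset.mem_sdiff, Finset.mem_insert]
        constructor
        · tauto
        · rintro ⟨h1, h2⟩
          refine ⟨Or.inr h1, ?_⟩
          rintro (rfl | h)
          · exact haS h1
          · exact h2 h
      rw [hd, gzF_insert d I a haI ha0, add_mul, Finset.sum_mul]
      congr 1
      · simp
      · refine Finset.sum_congr rfl fun j hj => ?_
        rw [gzF_update_notMem d (S \ I) j _ (by simp [hj])]
        ring
    have e3 : ∑ I ∈ S.powerset, ∑ j ∈ S \ I,
          d j * (gzF (Function.update d j (d j - 1)) I
            * gzF (Function.update d j (d j - 1)) (S \ I))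
        + ∑ I ∈ S.powerset, ∑ j ∈ I,
          d j * (gzF (Function.update d j (d j - 1)) I
            * gzF (Function.update d j (d j - 1)) (S \ I))
        = ∑ j ∈ S, d j * (2 * Nat.factorial (S.card - 1)) := by
      rw [← Finset.sum_add_distrib]
      rw [Finset.sum_congr rfl fun I hI => Finset.sum_sdiff (Finset.mem_powerset.mp hI)]
      rw [Finset.sum_comm]
      refine Finset.sum_congr rfl fun j hj => ?_
      rw [← Finset.mul_sum]
      by_cases hd : d j = 0
      · simp [hd]
      · rw [ih S _ (by omega)]
        have := sum_update_pred d S j hj hd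
        omega
    rw [e1, e2, add_add_add_comm, e3, ← Finset.sum_mul]
    have hf : gzF d S = Nat.factorial (S.card - 1) := by
      unfold gzF
      rw [if_pos (by omega)]
    have hc : S.card ≠ 0 := by omega
    rw [hf, Nat.add_sub_cancel, ← Nat.mul_factorial_pred hc]
    have : S.card = ∑ i ∈ S, d i + 1 := by omega
    generalize Nat.factorial (S.card - 1) = x
    rw [this]
    ring

lemma corr0_two {n : ℕ} (d : Fin n → ℕ) (I : Finset (Fin n)) :
    corr0 (0 ::ₘ 0 ::ₘ Multiset.map d I.val)
      = (gzF d I : ℚ) / ∏ i ∈ I, (Nat.factorial (d i) : ℚ) := by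
  have hs : (Multiset.map d I.val).sum = ∑ i ∈ I, d i := rfl
  have hp : (Multiset.map (fun d => (Nat.factorial d : ℚ)) (Multiset.map d I.val)).prod
      = ∏ i ∈ I, (Nat.factorial (d i) : ℚ) := by
    rw [Multiset.map_map]; rfl
  unfold corr0 gzF
  simp only [Multiset.card_cons, Multiset.card_map, Multiset.sum_cons, Multiset.map_cons,
    Multiset.prod_cons, hs, hp, Finset.card_val]
  by_cases h : ∑ i ∈ I, d i + 1 = I.card
  · rw [if_pos (by omega), if_pos h]
    simp
  · rw [if_neg (by omega), if_neg h]
    simp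

/-- Genus-0 case of Theorem 1.2: for n ≥ 2 and ∑ d_j = n-2,
(n-1)·⟨τ₀ ∏ τ_{d_j}⟩₀ = (1/2)·∑_{I⊔J={1,…,n}} ⟨τ₀² ∏_I τ_{d_i}⟩₀·⟨τ₀² ∏_J τ_{d_j}⟩₀. -/
theorem genus_zero_thm12 (n : ℕ) (hn : 2 ≤ n) (d : Fin n → ℕ)
    (hsum : ∑ j, d j = n - 2) :
    ((n : ℚ) - 1) * corr0 (0 ::ₘ Multiset.map d univ.val)
      = (1 / 2) * ∑ I ∈ univ.powerset,
          corr0 (0 ::ₘ 0 ::ₘ Multiset.map d I.val) *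
            corr0 (0 ::ₘ 0 ::ₘ Multiset.map d (univ \ I).val) := by
  have hm := gz_main n (univ : Finset (Fin n)) d (by simp) (by simp; omega)
  have hR : ∀ I ∈ (univ : Finset (Fin n)).powerset,
      corr0 (0 ::ₘ 0 ::ₘ Multiset.map d I.val) *
            corr0 (0 ::ₘ 0 ::ₘ Multiset.map d (univ \ I).val)
      = ((gzF d I * gzF d (univ \ I) : ℕ) : ℚ) / ∏ i, (Nat.factorial (d i) : ℚ) := by
    intro I hI
    rw [corr0_two, corr0_two, div_mul_div_comm, mul_comm (∏ i ∈ I, _),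
      Finset.prod_sdiff (Finset.mem_powerset.mp hI)]
    push_cast
    rfl
  rw [Finset.sum_congr rfl hR, ← Finset.sum_div, ← Nat.cast_sum, hm]
  have hs : (Multiset.map d univ.val).sum = ∑ i, d i := rfl
  have hp : (Multiset.map (fun d => (Nat.factorial d : ℚ)) (Multiset.map d univ.val)).prod
      = ∏ i, (Nat.factorial (d i) : ℚ) := by
    rw [Multiset.map_map]; rfl
  unfold corr0
  simp only [Multiset.card_cons, Multiset.card_map, Multiset.sum_cons, Multiset.map_cons,
    Multiset.prod_cons, hs, hp, Finset.card_val, Finset.card_univ, Fintype.card_fin]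
  obtain ⟨m, rfl⟩ : ∃ m, n = m + 2 := ⟨n - 2, by omega⟩
  by_cases h : 3 ≤ m + 2 + 1
  · rw [if_pos (by omega)]
    have e1 : m + 2 + 1 - 3 = m := by omega
    have e2 : m + 2 - 1 = m + 1 := by omega
    rw [e1, e2, Nat.factorial_succ]
    push_cast
    simp only [Nat.factorial_zero, Nat.cast_one, one_mul]
    ring
  · omega
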